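/- Let k, γ > 1 and t ≥ γ. Define h_{k,γ} : ℝ → ℝ by h_{k,γ}(s) = |s|^{γ−1}s if |s| ≤ k and h_{k,γ}(s) = γk^{γ−1}s − sign(s)(1−γ)k^γ if |s| > k, and Φ_{k,t,γ}(s) = ∫_0^s |h'_{k,γ}(r)|^{t/γ} dr. Then for every s ∈ ℝ, |Φ_{k,t,γ}(s)| ≤ C |h_{k,γ}(s)|^{(1/γ)(1 + t(γ−1)/γ)}, where C = max{γ^{(t−1)/γ}, γ/(1 + t(γ−1)/γ)}; in particular C does not depend on k. -/

import Mathlib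

/-!
Up to a constant factor, both `Φ` and the `C¹` function with derivative `h'` are powers on `[0, k]`
continued beyond `k` by their tangent line at `k`: with `m = 1 + t (γ - 1) / γ`, the exponent is `m`
for `Φ` and `γ` for the other. Rescaling by `k`, the estimate beyond `k` is
`1 + m v ≤ (1 + γ v) ^ (m / γ)` for `v = s / k - 1`, which is Bernoulli's inequality since `γ ≤ m`;
up to `k` both sides are equal. The function `hkg` dominates that `C¹` function on `0 ≤ s`, and
negative `s` are covered by oddness.
-/

noncomputable section

/-- The truncated power function `h_{k,γ}`. -/
noncomputable def hkg (k γ s : ℝ) : ℝ :=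
  if |s| ≤ k then |s| ^ (γ - 1) * s
  else γ * k ^ (γ - 1) * s - Real.sign s * ((1 - γ) * k ^ γ)

/-- The derivative of `h_{k,γ}`: `h'_{k,γ}(s) = γ|s|^{γ-1}` for `|s| ≤ k` and
`h'_{k,γ}(s) = γ k^{γ-1}` for `|s| > k`. -/
noncomputable def hkgDeriv (k γ s : ℝ) : ℝ :=
  if |s| ≤ k then γ * |s| ^ (γ - 1) else γ * k ^ (γ - 1)

/-- `Φ_{k,t,γ}(s) = ∫₀ˢ |h'_{k,γ}(r)|^{t/γ} dr`. -/
noncomputable def PhiKTG (k t γ s : ℝ) : ℝ :=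
  ∫ r in (0:ℝ)..s, |hkgDeriv k γ r| ^ (t / γ)

/-- The power `s ^ a` on `[0, k]`, continued beyond `k` by its tangent line at `k`: the common
shape, on the half-line `0 ≤ s` it is meant for, of `Φ_{k,t,γ}` and of the primitive of
`h'_{k,γ}`. -/
def rpowTangentExt (k a s : ℝ) : ℝ :=
  if s ≤ k then s ^ a else k ^ a + a * k ^ (a - 1) * (s - k)

section TangentExt

variable {k a b s : ℝ}

lemma rpowTangentExt_of_le (h : s ≤ k) : rpowTangentExt k a s = s ^ a := if_pos h

lemma rpowTangentExt_of_lt (h : k < s) :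
    rpowTangentExt k a s = k ^ a + a * k ^ (a - 1) * (s - k) := if_neg h.not_ge

lemma rpowTangentExt_of_lt_eq_mul (hk : 0 < k) (h : k < s) :
    rpowTangentExt k a s = k ^ a * (1 + a * (s / k - 1)) := by
  rw [rpowTangentExt_of_lt h, Real.rpow_sub_one hk.ne']
  field_simp

lemma rpowTangentExt_nonneg (hk : 0 ≤ k) (ha : 0 ≤ a) (hs : 0 ≤ s) :
    0 ≤ rpowTangentExt k a s := by
  rcases le_or_gt s k with hsk | hks
  · rw [rpowTangentExt_of_le hsk]
    positivity
  · rw [rpowTangentExt_of_lt hks]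
    have : 0 ≤ s - k := by linarith
    positivity

theorem rpowTangentExt_le_rpow (hk : 0 < k) (ha : 0 < a) (hab : a ≤ b) (hs : 0 ≤ s) :
    rpowTangentExt k b s ≤ rpowTangentExt k a s ^ (b / a) := by
  have rpow_rpow_div {x : ℝ} (hx : 0 ≤ x) : (x ^ a) ^ (b / a) = x ^ b := by
    rw [← Real.rpow_mul hx, mul_div_cancel₀ b ha.ne']
  rcases le_or_gt s k with hsk | hks
  · rw [rpowTangentExt_of_le hsk, rpowTangentExt_of_le hsk, rpow_rpow_div hs]
  · have hv : 0 ≤ s / k - 1 := by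
      rw [sub_nonneg, one_le_div hk]
      exact hks.le
    have bernoulli : 1 + b * (s / k - 1) ≤ (1 + a * (s / k - 1)) ^ (b / a) := by
      have h := one_add_mul_self_le_rpow_one_add (s := a * (s / k - 1)) (p := b / a)
        (by linarith [mul_nonneg ha.le hv]) ((one_le_div ha).2 hab)
      rwa [← mul_assoc, div_mul_cancel₀ b ha.ne'] at h
    calc rpowTangentExt k b s = k ^ b * (1 + b * (s / k - 1)) :=
          rpowTangentExt_of_lt_eq_mul hk hks
      _ ≤ k ^ b * (1 + a * (s / k - 1)) ^ (b / a) := by gcongr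
      _ = (k ^ a * (1 + a * (s / k - 1))) ^ (b / a) := by
          rw [Real.mul_rpow (by positivity) (by positivity), rpow_rpow_div hk.le]
      _ = rpowTangentExt k a s ^ (b / a) := by rw [rpowTangentExt_of_lt_eq_mul hk hks]

theorem integral_min_rpow_sub_one (hk : 0 < k) (ha : 0 < a) (hs : 0 ≤ s) :
    ∫ r in (0 : ℝ)..s, min r k ^ (a - 1) = rpowTangentExt k a s / a := by
  have left_eqOn {u : ℝ} (hu : 0 ≤ u) (huk : u ≤ k) :
      Set.EqOn (fun r ↦ r ^ (a - 1)) (fun r ↦ min r k ^ (a - 1)) (Set.uIcc 0 u) := by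
    intro r hr
    rw [Set.uIcc_of_le hu] at hr
    simp only [min_eq_left (hr.2.trans huk)]
  have integral_left {u : ℝ} (hu : 0 ≤ u) (huk : u ≤ k) :
      ∫ r in (0 : ℝ)..u, min r k ^ (a - 1) = u ^ a / a := by
    rw [← intervalIntegral.integral_congr (left_eqOn hu huk),
      integral_rpow (Or.inl (by linarith)), sub_add_cancel, Real.zero_rpow ha.ne', sub_zero]
  rcases le_or_gt s k with hsk | hks
  · rw [integral_left hs hsk, rpowTangentExt_of_le hsk]
  · have right_eqOn :
        Set.EqOn (fun _ ↦ k ^ (a - 1)) (fun r ↦ min r k ^ (a - 1)) (Set.uIcc k s) := by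
      intro r hr
      rw [Set.uIcc_of_le hks.le] at hr
      simp only [min_eq_right hr.1]
    have integrable_left :
        IntervalIntegrable (fun r ↦ min r k ^ (a - 1)) MeasureTheory.volume 0 k :=
      (intervalIntegral.intervalIntegrable_rpow' (by linarith)).congr
        ((left_eqOn hk.le le_rfl).mono Set.uIoc_subset_uIcc)
    have integrable_right :
        IntervalIntegrable (fun r ↦ min r k ^ (a - 1)) MeasureTheory.volume k s :=
      intervalIntegrable_const.congr (right_eqOn.mono Set.uIoc_subset_uIcc)
    rw [← intervalIntegral.integral_add_adjacent_intervals integrable_left integrable_right,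
      integral_left hk.le le_rfl, ← intervalIntegral.integral_congr right_eqOn,
      intervalIntegral.integral_const, rpowTangentExt_of_lt hks, smul_eq_mul]
    field_simp

end TangentExt

section Truncation

variable {k γ t s : ℝ}

lemma hkg_neg (k γ s : ℝ) : hkg k γ (-s) = -hkg k γ s := by
  unfold hkg
  rw [abs_neg, Real.sign_neg]
  split_ifs <;> ring

lemma hkgDeriv_eq_mul_min_rpow (k γ s : ℝ) : hkgDeriv k γ s = γ * min |s| k ^ (γ - 1) := by
  unfold hkgDeriv
  split_ifs with h
  · rw [min_eq_left h]
  · rw [min_eq_right (not_le.1 h).le]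

lemma hkgDeriv_neg (k γ s : ℝ) : hkgDeriv k γ (-s) = hkgDeriv k γ s := by
  rw [hkgDeriv_eq_mul_min_rpow, hkgDeriv_eq_mul_min_rpow, abs_neg]

lemma PhiKTG_neg (k t γ s : ℝ) : PhiKTG k t γ (-s) = -PhiKTG k t γ s := by
  have h := intervalIntegral.integral_comp_neg (a := 0) (b := s)
    (fun r ↦ |hkgDeriv k γ r| ^ (t / γ))
  simp only [hkgDeriv_neg, neg_zero] at h
  rw [PhiKTG, PhiKTG, h, intervalIntegral.integral_symm]

/- Beyond `k` the inequality is strict for `1 < γ`: the sign of the term `(1 - γ) k ^ γ` in `hkg`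
makes it exceed the `C¹` primitive of `hkgDeriv` by `2 (γ - 1) k ^ γ`. -/
lemma rpowTangentExt_le_hkg (hk : 0 < k) (hγ : 1 ≤ γ) (hs : 0 ≤ s) :
    rpowTangentExt k γ s ≤ hkg k γ s := by
  rw [hkg, abs_of_nonneg hs]
  rcases le_or_gt s k with hsk | hks
  · rw [rpowTangentExt_of_le hsk, if_pos hsk, ← Real.rpow_add_one' hs (by linarith),
      sub_add_cancel]
  · have hkγ : k ^ (γ - 1) * k = k ^ γ := by
      rw [← Real.rpow_add_one hk.ne', sub_add_cancel]
    rw [rpowTangentExt_of_lt hks, if_neg hks.not_ge, Real.sign_of_pos (hk.trans hks), one_mul]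
    have excess_nonneg : 0 ≤ 2 * (γ - 1) * k ^ γ :=
      mul_nonneg (by linarith) (by positivity)
    linear_combination excess_nonneg - γ * hkγ

theorem PhiKTG_eq_mul_rpowTangentExt (hk : 0 < k) (hγ : 0 ≤ γ)
    (hm : 0 < 1 + t * ((γ - 1) / γ)) (hs : 0 ≤ s) :
    PhiKTG k t γ s = γ ^ (t / γ) / (1 + t * ((γ - 1) / γ)) *
      rpowTangentExt k (1 + t * ((γ - 1) / γ)) s := by
  have integrand_eqOn : Set.EqOn (fun r ↦ |hkgDeriv k γ r| ^ (t / γ))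
      (fun r ↦ γ ^ (t / γ) * min r k ^ (1 + t * ((γ - 1) / γ) - 1)) (Set.uIcc 0 s) := by
    intro r hr
    rw [Set.uIcc_of_le hs] at hr
    have hmin : 0 ≤ min r k := le_min hr.1 hk.le
    simp only [hkgDeriv_eq_mul_min_rpow, abs_of_nonneg hr.1]
    rw [abs_of_nonneg (by positivity), Real.mul_rpow hγ (by positivity), ← Real.rpow_mul hmin]
    ring_nf
  rw [PhiKTG, intervalIntegral.integral_congr integrand_eqOn,
    intervalIntegral.integral_const_mul, integral_min_rpow_sub_one hk hm hs]
  ring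

lemma le_one_add_mul_sub_one_div (hγ : 1 ≤ γ) (ht : γ ≤ t) : γ ≤ 1 + t * ((γ - 1) / γ) :=
  calc γ = 1 + γ * ((γ - 1) / γ) := by field_simp; ring
    _ ≤ 1 + t * ((γ - 1) / γ) := by
      have : 0 ≤ (γ - 1) / γ := div_nonneg (by linarith) (by linarith)
      gcongr

lemma rpow_div_div_le_rpow_sub_one_div (hγ : 1 ≤ γ) (ht : γ ≤ t) :
    γ ^ (t / γ) / (1 + t * ((γ - 1) / γ)) ≤ γ ^ ((t - 1) / γ) := by
  have hγ₀ : 0 < γ := by linarith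
  calc γ ^ (t / γ) / (1 + t * ((γ - 1) / γ)) ≤ γ ^ (t / γ) / γ := by
        gcongr
        exact le_one_add_mul_sub_one_div hγ ht
    _ = γ ^ (t / γ - 1) := (Real.rpow_sub_one hγ₀.ne' _).symm
    _ ≤ γ ^ ((t - 1) / γ) := by
        gcongr
        rw [sub_div]
        gcongr
        exact (div_le_one hγ₀).2 hγ

theorem abs_PhiKTG_le_of_nonneg (hk : 0 < k) (hγ : 1 ≤ γ) (ht : γ ≤ t) (hs : 0 ≤ s) :
    |PhiKTG k t γ s| ≤ γ ^ (t / γ) / (1 + t * ((γ - 1) / γ)) *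
      |hkg k γ s| ^ ((1 / γ) * (1 + t * ((γ - 1) / γ))) := by
  have hγ₀ : 0 < γ := by linarith
  have hγm : γ ≤ 1 + t * ((γ - 1) / γ) := le_one_add_mul_sub_one_div hγ ht
  have hm : 0 < 1 + t * ((γ - 1) / γ) := hγ₀.trans_le hγm
  rw [PhiKTG_eq_mul_rpowTangentExt hk hγ₀.le hm hs,
    abs_of_nonneg (mul_nonneg (by positivity) (rpowTangentExt_nonneg hk.le hm.le hs)),
    one_div_mul_eq_div]
  gcongr
  calc rpowTangentExt k (1 + t * ((γ - 1) / γ)) s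
      ≤ rpowTangentExt k γ s ^ ((1 + t * ((γ - 1) / γ)) / γ) :=
        rpowTangentExt_le_rpow hk hγ₀ hγm hs
    _ ≤ |hkg k γ s| ^ ((1 + t * ((γ - 1) / γ)) / γ) := by
        have := rpowTangentExt_nonneg hk.le hγ₀.le hs
        gcongr
        exact (rpowTangentExt_le_hkg hk hγ hs).trans (le_abs_self _)

end Truncation

/- The constant is optimal: equality holds for `|s| ≤ k`. -/
theorem statement11_general (k γ t : ℝ) (hk : 0 < k) (hγ : 1 ≤ γ) (ht : γ ≤ t) (s : ℝ) :
    |PhiKTG k t γ s| ≤ γ ^ (t / γ) / (1 + t * ((γ - 1) / γ)) *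
      |hkg k γ s| ^ ((1 / γ) * (1 + t * ((γ - 1) / γ))) := by
  rcases le_total 0 s with hs | hs
  · exact abs_PhiKTG_le_of_nonneg hk hγ ht hs
  · have h := abs_PhiKTG_le_of_nonneg hk hγ ht (neg_nonneg.2 hs)
    rwa [PhiKTG_neg, hkg_neg, abs_neg, abs_neg] at h

/-- inequality (2) in the regularity proof: for `k, γ > 1`
and `t ≥ γ`, `|Φ_{k,t,γ}(s)| ≤ C |h_{k,γ}(s)|^{(1/γ)(1 + t(γ-1)/γ)}` with
`C = max{γ^{(t-1)/γ}, γ/(1 + t(γ-1)/γ)}` independent of `k`. -/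
theorem statement11 (k γ t : ℝ) (hk : 1 < k) (hγ : 1 < γ) (ht : γ ≤ t) :
    ∀ s : ℝ,
      |PhiKTG k t γ s| ≤
        max (γ ^ ((t - 1) / γ)) (γ / (1 + t * ((γ - 1) / γ))) *
          |hkg k γ s| ^ ((1 / γ) * (1 + t * ((γ - 1) / γ))) := fun s ↦
  (statement11_general k γ t (by linarith) hγ.le ht s).trans <| by
    gcongr
    exact (rpow_div_div_le_rpow_sub_one_div hγ.le ht).trans (le_max_left _ _)
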